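/- Let Δ ≥ 2, m = (Δ−1)² + 1, n = (Δ−1)² + Δ, and let T ∈ ℤ^{(m−Δ)×(Δ−1)} be the arc-node incidence matrix of the complete directed graph on Δ−1 nodes. Define A ∈ ℤ^{m×n} as the block matrix with rows: [I_{Δ−1} | I_{Δ−1} | 0 | 0], [T | 0 | I_{m−Δ} | 0], [−1_{Δ−1}^T | 0 | 0 | Δ]. Then A has full row rank and A is totally Δ-modular, i.e., for every k ∈ [m], every k×k submatrix of A has determinant of absolute value at most Δ; moreover some m×m submatrix of A has determinant of absolute value exactly Δ. -/

import Mathlib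

/-- The arcs of the complete directed graph on `ν` nodes: ordered pairs of distinct nodes. -/
abbrev CompleteArc (ν : ℕ) := {p : Fin ν × Fin ν // p.1 ≠ p.2}

/-- Row index type; its cardinality is `m = (Δ−1)² + 1`. -/
abbrev SparsityRow (ν : ℕ) := Fin ν ⊕ CompleteArc ν ⊕ Unit

/-- Column index type; its cardinality is `n = (Δ−1)² + Δ`. -/
abbrev SparsityCol (ν : ℕ) := Fin ν ⊕ Fin ν ⊕ CompleteArc ν ⊕ Unit

/-- The block matrix `A` with rows `[I_{Δ−1} | I_{Δ−1} | 0 | 0]`,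
`[T | 0 | I_{m−Δ} | 0]` (`T` the arc-node incidence matrix of the complete directed
graph on `Δ−1` nodes), and `[−1ᵀ_{Δ−1} | 0 | 0 | Δ]`. -/
def sparsityMatrix (Δ : ℕ) : Matrix (SparsityRow (Δ - 1)) (SparsityCol (Δ - 1)) ℤ :=
  fun i j =>
    match i, j with
    | Sum.inl i, Sum.inl j => if i = j then 1 else 0
    | Sum.inl i, Sum.inr (Sum.inl j) => if i = j then 1 else 0
    | Sum.inl _, _ => 0
    | Sum.inr (Sum.inl p), Sum.inl j =>
        (if p.1.1 = j then 1 else 0) - (if p.1.2 = j then 1 else 0)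
    | Sum.inr (Sum.inl p), Sum.inr (Sum.inr (Sum.inl q)) => if p = q then 1 else 0
    | Sum.inr (Sum.inl _), _ => 0
    | Sum.inr (Sum.inr _), Sum.inl _ => -1
    | Sum.inr (Sum.inr _), Sum.inr (Sum.inr (Sum.inr _)) => (Δ : ℤ)
    | Sum.inr (Sum.inr _), _ => 0

/-!
Deleting the last row and the last column of `A` leaves `[I I 0; T 0 I]`, which is totally
unimodular because `T` is an incidence matrix and adjoining unit rows and columns preserves total
unimodularity. Consider a minor of `A` that meets the last row. If it also uses the last column,
expand along that column, whose only nonzero entry is the corner `Δ`. Otherwise expand along the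
last row, where at most `Δ - 1` entries `-1` contribute. Every cofactor involved avoids the last row
and so has absolute value at most one.
-/

open Matrix Function

theorem exists_eq_inl_comp {ι α β : Type*} {f : ι → α ⊕ β} (hf : ∀ i b, f i ≠ Sum.inr b) :
    ∃ f' : ι → α, f = Sum.inl ∘ f' := by
  have hleft (i : ι) : ∃ a, f i = Sum.inl a := by
    rcases h : f i with a | b
    exacts [⟨a, rfl⟩, (hf i b h).elim]
  choose f' hf' using hleft
  exact ⟨f', funext hf'⟩

theorem sum_comp_le_sum_of_injective {ι κ M : Type*} [AddCommMonoid M] [PartialOrder M]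
    [IsOrderedAddMonoid M] [Fintype ι] [Fintype κ] {g : ι → κ} (hg : Injective g) {w : κ → M}
    (hw : ∀ j, 0 ≤ w j) : ∑ i, w (g i) ≤ ∑ j, w j :=
  (Finset.sum_map Finset.univ ⟨g, hg⟩ w).symm.trans_le (Finset.sum_le_univ_sum_of_nonneg hw)

section TotallyModular

variable {m n m' n' R : Type*} [CommRing R] [LinearOrder R]

/-- The determinant condition in total `d`-modularity: every square submatrix has determinant of
absolute value at most `d`. Full row rank, which the usual notion also demands, is kept separate, so
that the condition passes to submatrices. -/
def IsTotallyModular (d : R) (A : Matrix m n R) : Prop :=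
  ∀ (k : ℕ) (f : Fin k → m) (g : Fin k → n), Injective f → Injective g →
    |(A.submatrix f g).det| ≤ d

theorem IsTotallyModular.submatrix {d : R} {A : Matrix m n R} (hA : IsTotallyModular d A)
    {f : m' → m} {g : n' → n} (hf : Injective f) (hg : Injective g) :
    IsTotallyModular d (A.submatrix f g) :=
  fun k p q hp hq => hA k (f ∘ p) (g ∘ q) (hf.comp hp) (hg.comp hq)

theorem IsTotallyModular.abs_det_submatrix_le_of_ne_inr {d : R} {A : Matrix (m ⊕ m') n R}
    (hA : IsTotallyModular d A.toRows₁) {k : ℕ} {f : Fin k → m ⊕ m'} {g : Fin k → n}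
    (hf : Injective f) (hg : Injective g) (hupper : ∀ i c, f i ≠ Sum.inr c) :
    |(A.submatrix f g).det| ≤ d := by
  obtain ⟨f', rfl⟩ := exists_eq_inl_comp hupper
  exact hA k f' g hf.of_comp hg

variable [IsStrictOrderedRing R]

theorem IsTotallyModular.one_le {d : R} {A : Matrix m n R} (hA : IsTotallyModular d A) :
    1 ≤ d := by
  simpa using hA 0 Fin.elim0 Fin.elim0 (injective_of_subsingleton _) (injective_of_subsingleton _)

theorem isTotallyUnimodular_iff_isTotallyModular_one {A : Matrix m n ℤ} :
    A.IsTotallyUnimodular ↔ IsTotallyModular 1 A := by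
  have mem_range_sign_iff (x : ℤ) : x ∈ Set.range SignType.cast ↔ |x| ≤ 1 := by
    rw [SignType.range_eq, Int.abs_le_one_iff]
    simp [or_comm]
  simp only [IsTotallyUnimodular, IsTotallyModular, mem_range_sign_iff]

theorem abs_det_le_sum_abs_row_mul {k : ℕ} (M : Matrix (Fin (k + 1)) (Fin (k + 1)) R)
    (i : Fin (k + 1)) {d : R}
    (hd : ∀ j : Fin (k + 1), |(M.submatrix i.succAbove j.succAbove).det| ≤ d) :
    |M.det| ≤ (∑ j, |M i j|) * d := by
  rw [det_succ_row M i, Finset.sum_mul]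
  refine (Finset.abs_sum_le_sum_abs _ _).trans (Finset.sum_le_sum fun j _ => ?_)
  rw [abs_mul, abs_mul, abs_pow, abs_neg, abs_one, one_pow, one_mul]
  exact mul_le_mul_of_nonneg_left (hd j) (abs_nonneg _)

theorem abs_det_eq_of_col_eq_zero {k : ℕ} (M : Matrix (Fin (k + 1)) (Fin (k + 1)) R)
    {i j : Fin (k + 1)} (hM : ∀ i', i' ≠ i → M i' j = 0) :
    |M.det| = |M i j| * |(M.submatrix i.succAbove j.succAbove).det| := by
  rw [det_succ_column M j, Finset.sum_eq_single i (fun i' _ hi' => by simp [hM i' hi']) (by simp)]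
  rw [abs_mul, abs_mul, abs_pow, abs_neg, abs_one, one_pow, one_mul]

theorem IsTotallyModular.fromCols_zero {d : R} {A : Matrix m n R} (hA : IsTotallyModular d A) :
    IsTotallyModular d (fromCols A (0 : Matrix m n' R)) := by
  intro k f g hf hg
  by_cases hzero : ∃ j c, g j = Sum.inr c
  · obtain ⟨j, c, hj⟩ := hzero
    have hdet : ((fromCols A (0 : Matrix m n' R)).submatrix f g).det = 0 :=
      det_eq_zero_of_column_eq_zero j fun i => by simp [hj]
    rw [hdet, abs_zero]
    exact zero_le_one.trans hA.one_le
  · obtain ⟨g', rfl⟩ := exists_eq_inl_comp fun j c hj => hzero ⟨j, c, hj⟩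
    exact hA k f g' hf hg.of_comp

theorem IsTotallyModular.fromBlocks_row [Fintype n] {d b : R} {B : Matrix m n R}
    (hB : IsTotallyModular d B) (hb : 1 ≤ b) {w : n → R} (hw : ∑ j, |w j| ≤ b) {e : R}
    (he : |e| ≤ b) :
    IsTotallyModular (b * d)
      (fromBlocks B 0 (replicateRow Unit w) (replicateRow Unit fun _ : Unit => e)) := by
  set A := fromBlocks B 0 (replicateRow Unit w) (replicateRow Unit fun _ : Unit => e) with hA
  have hd : 0 ≤ d := zero_le_one.trans hB.one_le
  have hupper : IsTotallyModular d A.toRows₁ := hB.fromCols_zero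
  intro k f g hf hg
  by_cases hrow : ∃ i, f i = Sum.inr ()
  swap
  · exact (hupper.abs_det_submatrix_le_of_ne_inr hf hg fun i _ hi => hrow ⟨i, hi⟩).trans
      (le_mul_of_one_le_left hd hb)
  obtain ⟨i, hi⟩ := hrow
  obtain _ | k := k
  · exact i.elim0
  have hminor (j : Fin (k + 1)) :
      |((A.submatrix f g).submatrix i.succAbove j.succAbove).det| ≤ d :=
    hupper.abs_det_submatrix_le_of_ne_inr (hf.comp Fin.succAbove_right_injective)
      (hg.comp Fin.succAbove_right_injective)
      fun i' _ hi' => i.succAbove_ne i' (hf (hi'.trans hi.symm))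
  by_cases hcol : ∃ j, g j = Sum.inr ()
  · obtain ⟨j, hj⟩ := hcol
    have hcorner : A.submatrix f g i j = e := by simp [hA, hi, hj]
    have hoff : ∀ i', i' ≠ i → A.submatrix f g i' j = 0 := fun i' hi' => by
      rcases hr : f i' with r | _
      · simp [hA, hr, hj]
      · exact (hi' (hf (hr.trans hi.symm))).elim
    rw [abs_det_eq_of_col_eq_zero _ hoff, hcorner]
    exact mul_le_mul he (hminor j) (abs_nonneg _) (zero_le_one.trans hb)
  · obtain ⟨g', rfl⟩ := exists_eq_inl_comp fun j _ hj => hcol ⟨j, hj⟩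
    have hrow_sum : ∑ j, |A.submatrix f (Sum.inl ∘ g') i j| ≤ b := by
      simpa [hA, hi] using
        (sum_comp_le_sum_of_injective hg.of_comp fun c => abs_nonneg (w c)).trans hw
    exact (abs_det_le_sum_abs_row_mul _ i hminor).trans (mul_le_mul_of_nonneg_right hrow_sum hd)

end TotallyModular

section ArcIncidence

variable {α β m n : Type*} [DecidableEq m] [DecidableEq n]

/-- The arc-node incidence matrix of a directed graph with arcs `α` and nodes `n`, the arc `a`
leading from `tail a` to `head a`. An endpoint `none` stands for a node whose column has been
deleted; with it, these matrices are closed under taking submatrices. -/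
def arcIncidence (tail head : α → Option n) : Matrix α n ℤ :=
  of fun a j => (if tail a = some j then 1 else 0) - (if head a = some j then 1 else 0)

theorem arcIncidence_submatrix (tail head : α → Option n) (f : β → α) {g : m → n}
    (hg : Injective g) :
    (arcIncidence tail head).submatrix f g =
      arcIncidence (fun b => (tail (f b)).bind (partialInv g))
        (fun b => (head (f b)).bind (partialInv g)) := by
  ext b j
  simp [arcIncidence, Option.bind_eq_some_iff, hg.isPartialInv _ _]

theorem sum_arcIncidence_eq_zero_or_sum_abs_le_one [Fintype n] (tail head : α → Option n) (a : α) :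
    ∑ j, arcIncidence tail head a j = 0 ∨ ∑ j, |arcIncidence tail head a j| ≤ 1 := by
  rcases htail : tail a with _ | u <;> rcases hhead : head a with _ | v <;>
    simp [arcIncidence, htail, hhead, apply_ite abs]

theorem abs_det_arcIncidence_le_one {k : ℕ} (tail head : Fin k → Option (Fin k)) :
    |(arcIncidence tail head).det| ≤ 1 := by
  induction k with
  | zero => simp
  | succ k ih =>
    by_cases hsum : ∀ i, ∑ j, arcIncidence tail head i j = 0
    · have hdet : (arcIncidence tail head).det = 0 :=
        exists_mulVec_eq_zero_iff.mp ⟨1, one_ne_zero, funext fun i => by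
          simpa [mulVec, dotProduct] using hsum i⟩
      simp [hdet]
    · obtain ⟨i, hi⟩ := not_forall.mp hsum
      have habs := (sum_arcIncidence_eq_zero_or_sum_abs_le_one tail head i).resolve_left hi
      refine (abs_det_le_sum_abs_row_mul _ i (d := 1) fun j => ?_).trans (by simpa using habs)
      rw [arcIncidence_submatrix _ _ _ Fin.succAbove_right_injective]
      exact ih _ _

theorem isTotallyUnimodular_arcIncidence (tail head : α → Option n) :
    (arcIncidence tail head).IsTotallyUnimodular := by
  rw [isTotallyUnimodular_iff_isTotallyModular_one]
  intro k f g _ hg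
  rw [arcIncidence_submatrix _ _ _ hg]
  exact abs_det_arcIncidence_le_one _ _

end ArcIncidence

theorem rank_eq_card_of_det_submatrix_ne_zero {m n R : Type*} [CommRing R] [IsDomain R]
    [Fintype m] [DecidableEq m] [Fintype n] {A : Matrix m n R} {g : m → n}
    (hg : (A.submatrix id g).det ≠ 0) : A.rank = Fintype.card m :=
  (rank_le_card_height A).antisymm
    ((rank_of_det_ne_zero hg).symm.trans_le (rank_submatrix_le A id g))

theorem card_completeArc (ν : ℕ) : Fintype.card (CompleteArc ν) = ν * ν - ν := by
  rw [Fintype.card_of_subtype (Finset.univ : Finset (Fin ν)).offDiag (by simp),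
    Finset.offDiag_card, Finset.card_fin]

theorem card_sparsityRow (ν : ℕ) : Fintype.card (SparsityRow ν) = ν ^ 2 + 1 := by
  have hν := Nat.le_mul_self ν
  simp only [Fintype.card_sum, Fintype.card_fin, Fintype.card_unit, card_completeArc, sq]
  omega

theorem card_sparsityCol (ν : ℕ) : Fintype.card (SparsityCol ν) = ν ^ 2 + (ν + 1) := by
  rw [Fintype.card_sum, card_sparsityRow, Fintype.card_fin]
  omega

/-- The matrix `T`: the arc-node incidence matrix of the complete directed graph on `ν` nodes. -/
abbrev completeArcIncidence (ν : ℕ) : Matrix (CompleteArc ν) (Fin ν) ℤ :=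
  arcIncidence (fun p => some p.1.1) fun p => some p.1.2

theorem sparsityMatrix_eq_submatrix_fromBlocks (Δ : ℕ) :
    sparsityMatrix Δ =
      (fromBlocks (fromCols (fromRows 1 (completeArcIncidence (Δ - 1))) 1) 0
        (replicateRow Unit (Sum.elim (-1) 0)) (replicateRow Unit fun _ : Unit => (Δ : ℤ))).submatrix
        (Equiv.sumAssoc _ _ _).symm
        (((Equiv.refl _).sumCongr (Equiv.sumAssoc _ _ _).symm).trans
          (Equiv.sumAssoc _ _ _).symm) := by
  ext (i | p | _) (j | j | q | _) <;>
    simp [sparsityMatrix, arcIncidence, one_apply]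

theorem isTotallyModular_sparsityMatrix {Δ : ℕ} (hΔ : 1 ≤ Δ) :
    IsTotallyModular (Δ : ℤ) (sparsityMatrix Δ) := by
  have hupper : IsTotallyModular 1
      (fromCols (fromRows 1 (completeArcIncidence (Δ - 1))) 1) :=
    isTotallyUnimodular_iff_isTotallyModular_one.mp
      (isTotallyUnimodular_arcIncidence _ _).one_fromRows.fromCols_one
  have hA := hupper.fromBlocks_row (b := (Δ : ℤ)) (w := Sum.elim (-1) 0) (e := Δ)
    (by exact_mod_cast hΔ) (by simp) (Nat.abs_cast Δ).le
  rw [mul_one] at hA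
  rw [sparsityMatrix_eq_submatrix_fromBlocks]
  exact hA.submatrix (Equiv.injective _) (Equiv.injective _)

theorem det_sparsityMatrix_submatrix_inr (Δ : ℕ) :
    ((sparsityMatrix Δ).submatrix id Sum.inr).det = Δ := by
  have hdiag : (sparsityMatrix Δ).submatrix id Sum.inr =
      diagonal (Sum.elim 1 (Sum.elim 1 fun _ => (Δ : ℤ))) := by
    ext (i | p | _) (j | q | _) <;> simp [sparsityMatrix, diagonal_apply]
  rw [hdiag, det_diagonal]
  simp

/-- For `Δ ≥ 2`, the block matrix `A` above (with `m = (Δ−1)² + 1`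
rows and `n = (Δ−1)² + Δ` columns) has full row rank and is totally `Δ`-modular:
every `k×k` submatrix has determinant of absolute value at most `Δ`; moreover some
`m×m` submatrix has determinant of absolute value exactly `Δ`. -/
theorem sparsity_matrix_totally_modular (Δ : ℕ) (hΔ : 2 ≤ Δ) :
    Fintype.card (SparsityRow (Δ - 1)) = (Δ - 1) ^ 2 + 1 ∧
    Fintype.card (SparsityCol (Δ - 1)) = (Δ - 1) ^ 2 + Δ ∧
    (sparsityMatrix Δ).rank = (Δ - 1) ^ 2 + 1 ∧
    (∀ (k : ℕ) (f : Fin k → SparsityRow (Δ - 1)) (g : Fin k → SparsityCol (Δ - 1)),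
      Function.Injective f → Function.Injective g →
      |((sparsityMatrix Δ).submatrix f g).det| ≤ (Δ : ℤ)) ∧
    (∃ g : SparsityRow (Δ - 1) → SparsityCol (Δ - 1), Function.Injective g ∧
      |((sparsityMatrix Δ).submatrix id g).det| = (Δ : ℤ)) := by
  have hdet := det_sparsityMatrix_submatrix_inr Δ
  have hne : ((sparsityMatrix Δ).submatrix id Sum.inr).det ≠ 0 := by
    rw [hdet]
    exact_mod_cast (by omega : Δ ≠ 0)
  refine ⟨card_sparsityRow _, ?_, ?_, isTotallyModular_sparsityMatrix (by omega),
    Sum.inr, Sum.inr_injective, by rw [hdet, Nat.abs_cast]⟩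
  · rw [card_sparsityCol, Nat.sub_add_cancel (by omega)]
  · rw [rank_eq_card_of_det_submatrix_ne_zero hne, card_sparsityRow]
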